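/- Mean one for the number of first vertices at a given label (probabilistic form of the generating-function computation): fix integers ℓ ≥ r, and let (p_k)_{k≥0} be nonnegative reals with Σ_{k≥0} p_k = 1 such that Σ_{k≥0} p_k x^k = f_{ℓ,r}(x) for every x ∈ [0, 1), where for x ∈ [0, 1), a(x) := (−1 + √(1 + 8/(1−x)))/2 and f_{ℓ,r}(x) := 1 − 2 / ((ℓ − r + a(x)) · (ℓ − r + 1 + a(x))). Then Σ_{k≥0} k · p_k = 1. In other words, any ℕ-valued random variable whose probability generating function is f_{ℓ,r} has expectation exactly 1. -/

import Mathlib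

/-!
Write `n = ℓ - r ≥ 0` and `D x = ∑ p_k (1 + x + ⋯ + x^(k-1))`, the difference quotient
`(1 - f x) / (1 - x)` of the generating function at `1`. Since `1 - x = 2 / (a (a + 1))` with
`a = aCD x`, one finds `D x = a (a + 1) / ((n + a) (n + 1 + a))`; this is at most `1`, and it tends
to `1` as `x ↑ 1` because `a → ∞`. The coefficient of `p_k` in `D x` is at most `k` and tends to
`k`. Letting `x ↑ 1` in finite partial sums of `D x ≤ 1` bounds `∑ k p_k` by `1`, which gives
summability, and letting `x ↑ 1` in `D x ≤ ∑ k p_k` gives the reverse inequality.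
-/

open Filter Topology

/-- For `x ∈ [0,1)`, the positive root of `a(a+1) = 2/(1-x)`. -/
noncomputable def aCD (x : ℝ) : ℝ := (-1 + Real.sqrt (1 + 8 / (1 - x))) / 2

/-- The Chassaing–Durhuus-type generating function `f_{ℓ,r}` on `[0,1)`. -/
noncomputable def fCD (ℓ r : ℤ) (x : ℝ) : ℝ :=
  1 - 2 / ((((ℓ:ℝ) - (r:ℝ)) + aCD x) * (((ℓ:ℝ) - (r:ℝ)) + 1 + aCD x))

lemma aCD_pos {x : ℝ} (hx : x < 1) : 0 < aCD x := by
  have h : (1 : ℝ) < Real.sqrt (1 + 8 / (1 - x)) := by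
    rw [Real.lt_sqrt (by norm_num)]
    have : 0 < 8 / (1 - x) := div_pos (by norm_num) (by linarith)
    linarith
  unfold aCD
  linarith

lemma aCD_mul_add_one {x : ℝ} (hx : x < 1) : aCD x * (aCD x + 1) = 2 / (1 - x) := by
  have h0 : 0 < 8 / (1 - x) := div_pos (by norm_num) (by linarith)
  have h := Real.sq_sqrt (show 0 ≤ 1 + 8 / (1 - x) by linarith)
  have h2 : 8 / (1 - x) = 4 * (2 / (1 - x)) := by ring
  unfold aCD
  linear_combination (1 / 4) * h + (1 / 4) * h2

lemma tendsto_aCD : Tendsto aCD (𝓝[<] 1) atTop := by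
  have h1 : Tendsto (fun x : ℝ => 1 - x) (𝓝[<] 1) (𝓝[>] 0) := by
    refine tendsto_nhdsWithin_iff.2 ⟨?_, ?_⟩
    · have : Tendsto (fun x : ℝ => 1 - x) (𝓝 1) (𝓝 (1 - 1)) := by
        exact (continuous_const.sub continuous_id).tendsto 1
      rw [sub_self] at this
      exact this.mono_left nhdsWithin_le_nhds
    · filter_upwards [self_mem_nhdsWithin] with x hx
      exact sub_pos.2 (Set.mem_Iio.1 hx)
  have h2 : Tendsto (fun x : ℝ => 1 + 8 / (1 - x)) (𝓝[<] 1) atTop := by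
    refine tendsto_atTop_add_const_left _ _ ?_
    simp only [div_eq_mul_inv]
    exact (tendsto_inv_nhdsGT_zero.comp h1).const_mul_atTop (by norm_num)
  have h3 := Real.tendsto_sqrt_atTop.comp h2
  exact (tendsto_atTop_add_const_left _ (-1) h3).atTop_div_const (by norm_num)

/-- The difference quotient of `fCD ℓ r` at `1`, in a form that exhibits its limit `1` as
`aCD x → ∞`. -/
lemma one_sub_fCD_div {ℓ r : ℤ} (hlr : r ≤ ℓ) {x : ℝ} (hx : x < 1) :
    (1 - fCD ℓ r x) / (1 - x) =
      (1 - ((ℓ : ℝ) - r) / (((ℓ : ℝ) - r) + aCD x)) *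
        (1 - ((ℓ : ℝ) - r) / (((ℓ : ℝ) - r) + 1 + aCD x)) := by
  have hn : (0 : ℝ) ≤ (ℓ : ℝ) - r := sub_nonneg.2 (by exact_mod_cast hlr)
  have ha := aCD_pos hx
  have hm := aCD_mul_add_one hx
  unfold fCD
  set a := aCD x
  set n := (ℓ : ℝ) - r
  have e1 : n + a ≠ 0 := by positivity
  have e2 : n + 1 + a ≠ 0 := by positivity
  calc (1 - (1 - 2 / ((n + a) * (n + 1 + a)))) / (1 - x)
      = (2 / (1 - x)) / ((n + a) * (n + 1 + a)) := by ring
    _ = _ := by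
      rw [← hm]
      field_simp
      ring

lemma one_sub_fCD_div_le_one {ℓ r : ℤ} (hlr : r ≤ ℓ) {x : ℝ} (hx : x < 1) :
    (1 - fCD ℓ r x) / (1 - x) ≤ 1 := by
  rw [one_sub_fCD_div hlr hx]
  have hn : (0 : ℝ) ≤ (ℓ : ℝ) - r := sub_nonneg.2 (by exact_mod_cast hlr)
  have ha := aCD_pos hx
  set a := aCD x
  set n := (ℓ : ℝ) - r
  have h1 : 0 ≤ n / (n + a) := by positivity
  have h2 : 0 ≤ n / (n + 1 + a) := by positivity
  have h3 : n / (n + 1 + a) ≤ 1 := div_le_one_of_le₀ (by linarith) (by linarith)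
  exact mul_le_one₀ (by linarith) (by linarith) (by linarith)

lemma tendsto_one_sub_fCD_div {ℓ r : ℤ} (hlr : r ≤ ℓ) :
    Tendsto (fun x => (1 - fCD ℓ r x) / (1 - x)) (𝓝[<] 1) (𝓝 1) := by
  have h (c : ℝ) : Tendsto (fun x => 1 - ((ℓ : ℝ) - r) / (c + aCD x)) (𝓝[<] 1) (𝓝 (1 - 0)) :=
    tendsto_const_nhds.sub
      ((tendsto_atTop_add_const_left _ c tendsto_aCD).const_div_atTop _)
  have h2 := (h ((ℓ : ℝ) - r)).mul (h ((ℓ : ℝ) - r + 1))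
  simp only [sub_zero, mul_one] at h2
  refine h2.congr' ?_
  filter_upwards [self_mem_nhdsWithin] with x hx
  exact (one_sub_fCD_div hlr hx).symm

/-- The difference quotient at `1` of a probability generating function, as a series whose
coefficients `1 + x + ⋯ + x^(k-1)` increase to `k`. -/
lemma hasSum_pgf_quotient {p : ℕ → ℝ} (hp : ∀ k, 0 ≤ p k) (hsum : HasSum p 1)
    {x : ℝ} (hx : x ∈ Set.Ico (0 : ℝ) 1) :
    HasSum (fun k => p k * ∑ i ∈ Finset.range k, x ^ i)
      ((1 - ∑' k, p k * x ^ k) / (1 - x)) := by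
  have hs : Summable fun k => p k * x ^ k :=
    Summable.of_nonneg_of_le (fun k => mul_nonneg (hp k) (pow_nonneg hx.1 k))
      (fun k => mul_le_of_le_one_right (hp k) (pow_le_one₀ hx.1 hx.2.le)) hsum.summable
  refine ((hsum.sub hs.hasSum).div_const (1 - x)).congr_fun fun k => ?_
  have h1 : 1 - x ≠ 0 := (sub_pos.2 hx.2).ne'
  rw [eq_div_iff h1, mul_assoc, geom_sum_mul_neg]
  ring

/-- Mean one for the number of first vertices at a given label: any probability
distribution `(p_k)` on `ℕ` whose probability generating function is `f_{ℓ,r}`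
(with `ℓ ≥ r`) has expectation exactly `1`. -/
theorem mean_one_of_pgf_fCD (ℓ r : ℤ) (hlr : r ≤ ℓ)
    (p : ℕ → ℝ) (hp : ∀ k, 0 ≤ p k) (hsum : ∑' k, p k = 1)
    (hgen : ∀ x ∈ Set.Ico (0:ℝ) 1, ∑' k, p k * x ^ k = fCD ℓ r x) :
    Summable (fun k : ℕ => (k:ℝ) * p k) ∧ ∑' k : ℕ, (k:ℝ) * p k = 1 := by
  have hS : HasSum p 1 := by
    -- A nonsummable `p` would have `tsum` equal to the junk value `0`.
    have : Summable p := by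
      by_contra h
      rw [tsum_eq_zero_of_not_summable h] at hsum
      exact zero_ne_one hsum
    exact hsum ▸ this.hasSum
  have hD : ∀ x ∈ Set.Ico (0 : ℝ) 1, HasSum (fun k => p k * ∑ i ∈ Finset.range k, x ^ i)
      ((1 - fCD ℓ r x) / (1 - x)) := fun x hx => hgen x hx ▸ hasSum_pgf_quotient hp hS hx
  have hmem : ∀ᶠ x in 𝓝[<] (1 : ℝ), x ∈ Set.Ico (0 : ℝ) 1 := Ico_mem_nhdsLT zero_lt_one
  have hnn : 0 ≤ fun k : ℕ => (k : ℝ) * p k := fun k => mul_nonneg k.cast_nonneg (hp k)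
  have hfin : ∀ u : Finset ℕ, ∑ k ∈ u, (k : ℝ) * p k ≤ 1 := by
    intro u
    have hlim : Tendsto (fun x : ℝ => ∑ k ∈ u, p k * ∑ i ∈ Finset.range k, x ^ i) (𝓝[<] 1)
        (𝓝 (∑ k ∈ u, (k : ℝ) * p k)) := by
      have hc : Continuous fun x : ℝ => ∑ k ∈ u, p k * ∑ i ∈ Finset.range k, x ^ i := by
        fun_prop
      have := hc.tendsto 1
      simp only [one_pow, Finset.sum_const, Finset.card_range, nsmul_eq_mul, mul_one] at this
      simp only [mul_comm _ (p _)]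
      exact this.mono_left nhdsWithin_le_nhds
    refine le_of_tendsto hlim ?_
    filter_upwards [hmem] with x hx
    refine (sum_le_hasSum u (fun k _ => mul_nonneg (hp k) ?_) (hD x hx)).trans
      (one_sub_fCD_div_le_one hlr hx.2)
    exact Finset.sum_nonneg fun i _ => pow_nonneg hx.1 i
  have hsm : Summable fun k : ℕ => (k : ℝ) * p k := summable_of_sum_le hnn hfin
  refine ⟨hsm, le_antisymm (Real.tsum_le_of_sum_le hnn hfin) ?_⟩
  refine le_of_tendsto (tendsto_one_sub_fCD_div hlr) ?_
  filter_upwards [hmem] with x hx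
  refine hasSum_le (fun k => ?_) (hD x hx) hsm.hasSum
  rw [mul_comm (k : ℝ)]
  refine mul_le_mul_of_nonneg_left ?_ (hp k)
  calc ∑ i ∈ Finset.range k, x ^ i ≤ ∑ i ∈ Finset.range k, (1 : ℝ) :=
        Finset.sum_le_sum fun i _ => pow_le_one₀ hx.1 hx.2.le
    _ = k := by simp
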